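/- Suppose λ is an r-multipartition of n and μ is an r-multipartition of m, and that λ and μ have the same hub. Then m ≡ n (mod e) and w(λ) − w(μ) = r(n − m)/e. -/

import Mathlib

/-!
Combinatorial framework for multipartitions, residues, β-sets, abacus levels,
weights, hubs, core blocks and Scopes-type moves, following Fayers and the paper.
Rows and columns of Young diagrams are indexed from 0, so the node in row `b`
and column `c` (0-based) of component `j` has residue `a j + c - b` mod `e`.
-/

open scoped Classical

namespace AK

/-- A partition, given by its (antitone, finitely supported) sequence of parts,
rows indexed from `0`. -/
structure PartitionFun : Type where
  part : ℕ → ℕ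
  antitone : Antitone part
  finite_support : ∃ N, ∀ b, N ≤ b → part b = 0

/-- The node in row `b`, column `c` (0-based) belongs to the Young diagram. -/
def PartitionFun.InDiag (lam : PartitionFun) (b c : ℕ) : Prop := c < lam.part b

/-- The node `(b,c)` is removable: deleting it leaves the diagram of a partition. -/
def PartitionFun.Removable (lam : PartitionFun) (b c : ℕ) : Prop :=
  lam.part b = c + 1 ∧ lam.part (b + 1) ≤ c

/-- The node `(b,c)` is addable: adjoining it gives the diagram of a partition. -/
def PartitionFun.Addable (lam : PartitionFun) (b c : ℕ) : Prop :=
  lam.part b = c ∧ (b = 0 ∨ lam.part b < lam.part (b - 1))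

/-- An `r`-multipartition. -/
abbrev Multipartition (r : ℕ) := Fin r → PartitionFun

/-- Nodes: `(b, c, j)` with row `b`, column `c`, component `j`. -/
abbrev Node (r : ℕ) := ℕ × ℕ × Fin r

/-- The Young diagram of a multipartition, as a set of nodes. -/
def diag {r : ℕ} (lam : Multipartition r) : Set (Node r) :=
  {x | (lam x.2.2).InDiag x.1 x.2.1}

/-- The size `n` of a multipartition of `n`. -/
noncomputable def msize {r : ℕ} (lam : Multipartition r) : ℕ :=
  Set.ncard (diag lam)

/-- `c_i(λ)`: the number of nodes of residue `i` (mod `e`). -/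
noncomputable def nodeCount {r : ℕ} (e : ℕ) (a : Fin r → ℤ) (lam : Multipartition r)
    (i : ℤ) : ℕ :=
  Set.ncard {x : Node r | (lam x.2.2).InDiag x.1 x.2.1 ∧
    (a x.2.2 + (x.2.1 : ℤ) - (x.1 : ℤ)) % (e : ℤ) = i % e}

/-- Number of removable nodes of residue `i` in component `j`. -/
noncomputable def removableCount {r : ℕ} (e : ℕ) (a : Fin r → ℤ) (lam : Multipartition r)
    (i : ℤ) (j : Fin r) : ℕ :=
  Set.ncard {p : ℕ × ℕ | (lam j).Removable p.1 p.2 ∧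
    (a j + (p.2 : ℤ) - (p.1 : ℤ)) % (e : ℤ) = i % e}

/-- Number of addable nodes of residue `i` in component `j`. -/
noncomputable def addableCount {r : ℕ} (e : ℕ) (a : Fin r → ℤ) (lam : Multipartition r)
    (i : ℤ) (j : Fin r) : ℕ :=
  Set.ncard {p : ℕ × ℕ | (lam j).Addable p.1 p.2 ∧
    (a j + (p.2 : ℤ) - (p.1 : ℤ)) % (e : ℤ) = i % e}

/-- `δ^j_i(λ)` = (removable `i`-nodes of component `j`) − (addable `i`-nodes of component `j`). -/
noncomputable def delta {r : ℕ} (e : ℕ) (a : Fin r → ℤ) (lam : Multipartition r)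
    (i : ℤ) (j : Fin r) : ℤ :=
  (removableCount e a lam i j : ℤ) - (addableCount e a lam i j : ℤ)

/-- The hub `δ_i(λ) = Σ_j δ^j_i(λ)`. -/
noncomputable def hub {r : ℕ} (e : ℕ) (a : Fin r → ℤ) (lam : Multipartition r) (i : ℤ) : ℤ :=
  ∑ j : Fin r, delta e a lam i j

/-- Two multipartitions have the same hub. -/
def SameHub {r : ℕ} (e : ℕ) (a : Fin r → ℤ) (lam mu : Multipartition r) : Prop :=
  ∀ i : ℤ, hub e a lam i = hub e a mu i

/-- `d_i(m) = min { δ^j_i(m) : 1 ≤ j ≤ r }`. -/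
noncomputable def dmin {r : ℕ} (e : ℕ) (a : Fin r → ℤ) (lam : Multipartition r) (i : ℤ) : ℤ :=
  sInf {x : ℤ | ∃ j : Fin r, delta e a lam i j = x}

/-- The weight `w(λ) = Σ_j c_{a_j}(λ) − (1/2) Σ_{i∈ℤ/eℤ} (c_i(λ) − c_{i+1}(λ))²`. -/
noncomputable def weight {r : ℕ} (e : ℕ) (a : Fin r → ℤ) (lam : Multipartition r) : ℚ :=
  (∑ j : Fin r, (nodeCount e a lam (a j) : ℚ)) -
    (1 / 2 : ℚ) * ∑ i ∈ Finset.range e,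
      ((nodeCount e a lam (i : ℤ) : ℚ) - (nodeCount e a lam ((i : ℤ) + 1) : ℚ)) ^ 2

/-- The β-set `B^j = {λ_b + a_j − b : b ≥ 1}` (here with rows indexed from 0). -/
def betaSet (aj : ℤ) (lam : PartitionFun) : Set ℤ :=
  {x | ∃ b : ℕ, x = (lam.part b : ℤ) + aj - ((b : ℤ) + 1)}

/-- A partition is an `e`-core: `β ∈ B` implies `β − e ∈ B`. -/
def IsECore (e : ℕ) (aj : ℤ) (lam : PartitionFun) : Prop :=
  ∀ x ∈ betaSet aj lam, x - (e : ℤ) ∈ betaSet aj lam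

/-- A multicore: all components are `e`-cores. -/
def IsMulticore {r : ℕ} (e : ℕ) (a : Fin r → ℤ) (lam : Multipartition r) : Prop :=
  ∀ j, IsECore e (a j) (lam j)

/-- `ℓ^a_{ij}(λ)`: the level of the lowest bead on runner `i`, i.e. the largest `x`
with `x·e + i` in the β-set. -/
noncomputable def level (e : ℕ) (aj : ℤ) (lam : PartitionFun) (i : ℕ) : ℤ :=
  sSup {x : ℤ | x * (e : ℤ) + (i : ℤ) ∈ betaSet aj lam}

/-- `γ^{jk}_i(λ) = ℓ^a_{ij}(λ) − ℓ^a_{ik}(λ)`. -/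
noncomputable def gamma {r : ℕ} (e : ℕ) (a : Fin r → ℤ) (lam : Multipartition r)
    (i : ℕ) (j k : Fin r) : ℤ :=
  level e (a j) (lam j) i - level e (a k) (lam k) i

/-- `γ^{jk}_{il}(λ) = γ^{jk}_i(λ) − γ^{jk}_l(λ)`. -/
noncomputable def gammaD {r : ℕ} (e : ℕ) (a : Fin r → ℤ) (lam : Multipartition r)
    (i l : ℕ) (j k : Fin r) : ℤ :=
  gamma e a lam i j k - gamma e a lam l j k

/-- Move a bead from runner `i` to runner `l` in the β-set `S`: replace the largest
element of `S` congruent to `i` mod `e` by the smallest integer congruent to `l`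
mod `e` not in `S`. -/
noncomputable def moveBead (e : ℕ) (i l : ℕ) (S : Set ℤ) : Set ℤ :=
  insert (sInf {x : ℤ | x % (e : ℤ) = (l : ℤ) % e ∧ x ∉ S})
    (S \ {sSup {x : ℤ | x % (e : ℤ) = (i : ℤ) % e ∧ x ∈ S}})

/-- The effect of `s^{jk}_{il}` on the tuple of β-sets: move a bead from runner `i`
to runner `l` in component `j`, and from runner `l` to runner `i` in component `k`. -/
noncomputable def swapSets {r : ℕ} (e i l : ℕ) (j k : Fin r) (S : Fin r → Set ℤ) :
    Fin r → Set ℤ :=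
  Function.update (Function.update S j (moveBead e i l (S j))) k
    (moveBead e l i (Function.update S j (moveBead e i l (S j)) k))

/-- `m' = s^{jk}_{il}(m)`, expressed via β-sets. -/
def IsSwap {r : ℕ} (e : ℕ) (a : Fin r → ℤ) (i l : ℕ) (j k : Fin r)
    (m m' : Multipartition r) : Prop :=
  ∀ j', betaSet (a j') (m' j') = swapSets e i l j k (fun t => betaSet (a t) (m t)) j'

/-- `λ` lies in a core block: its weight is minimal among the weights of all
multipartitions with the same hub. -/
def MinimalWeight {r : ℕ} (e : ℕ) (a : Fin r → ℤ) (lam : Multipartition r) : Prop :=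
  ∀ mu : Multipartition r, SameHub e a lam mu → weight e a lam ≤ weight e a mu

/-- `(b_0,…,b_{e−1})` is a base tuple for `mu` with respect to the multicharge `a'`
(congruent to `a` componentwise mod `e`): each `ℓ^{a'}_{ij}(mu)` is `b i` or `b i + 1`. -/
def IsBaseTuple {r : ℕ} (e : ℕ) (a : Fin r → ℤ) (mu : Multipartition r)
    (a' : Fin r → ℤ) (b : ℕ → ℤ) : Prop :=
  (∀ j, (e : ℤ) ∣ (a' j - a j)) ∧
    ∀ i < e, ∀ j, level e (a' j) (mu j) i = b i ∨ level e (a' j) (mu j) i = b i + 1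

/-- `K_i(C)` for the core block of `mu`: among all base tuples (over all admissible
multicharges), take `b i` maximal and then `b (i−1)` minimal, and set
`K_i = b_i − b_{i−1} − 1` for `i ≠ 0`, `K_0 = b_0 − b_{e−1} − 2`. -/
noncomputable def Kconst {r : ℕ} (e : ℕ) (a : Fin r → ℤ) (mu : Multipartition r)
    (i : ℕ) : ℤ :=
  let Bi : ℤ := sSup {x : ℤ | ∃ a' bt, IsBaseTuple e a mu a' bt ∧ bt i = x}
  let iprev : ℕ := if i = 0 then e - 1 else i - 1
  let Bp : ℤ := sInf {x : ℤ | ∃ a' bt, IsBaseTuple e a mu a' bt ∧ bt i = Bi ∧ bt iprev = x}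
  Bi - Bp - (if i = 0 then 2 else 1)

/-- The map `φ_i : ℤ → ℤ`. -/
def phiMap (e i : ℕ) (x : ℤ) : ℤ :=
  if x % (e : ℤ) = ((i : ℤ) - 1) % e then x + 1
  else if x % (e : ℤ) = (i : ℤ) % e then x - 1
  else x

/-- Lexicographic order on multipartitions: `λ > μ`. -/
def lexGT {r : ℕ} (lam mu : Multipartition r) : Prop :=
  ∃ j : Fin r, (∀ j' < j, (lam j').part = (mu j').part) ∧
    ∃ i : ℕ, (∀ i' < i, (lam j).part i' = (mu j).part i') ∧
      (mu j).part i < (lam j).part i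

/-- `x` is above `y`: `j < j'` or (`j = j'` and `b < b'`). -/
def NodeAbove {r : ℕ} (x y : Node r) : Prop :=
  x.2.2 < y.2.2 ∨ (x.2.2 = y.2.2 ∧ x.1 < y.1)

/-- The order on nodes: `x < y` iff `y` is above `x`. -/
def NodeLT {r : ℕ} (x y : Node r) : Prop := NodeAbove y x

/-- `N_A(λ)` = (addable `i`-nodes of `λ` below `A`) − (removable `i`-nodes of `λ` below `A`). -/
noncomputable def Nfac {r : ℕ} (e : ℕ) (a : Fin r → ℤ) (lam : Multipartition r)
    (i : ℤ) (A : Node r) : ℤ :=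
  (Set.ncard {y : Node r | (lam y.2.2).Addable y.1 y.2.1 ∧
      (a y.2.2 + (y.2.1 : ℤ) - (y.1 : ℤ)) % (e : ℤ) = i % e ∧ NodeAbove A y} : ℤ) -
  (Set.ncard {y : Node r | (lam y.2.2).Removable y.1 y.2.1 ∧
      (a y.2.2 + (y.2.1 : ℤ) - (y.1 : ℤ)) % (e : ℤ) = i % e ∧ NodeAbove A y} : ℤ)

/-- `lam` is obtained from `mu` by adding one `e`-rim hook to some component:
on β-sets, some `β ∈ B^j` with `β + e ∉ B^j` is replaced by `β + e`. -/
def AddRimHook {r : ℕ} (e : ℕ) (a : Fin r → ℤ) (mu lam : Multipartition r) : Prop :=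
  ∃ (j : Fin r) (β : ℤ), β ∈ betaSet (a j) (mu j) ∧ β + (e : ℤ) ∉ betaSet (a j) (mu j) ∧
    betaSet (a j) (lam j) = insert (β + (e : ℤ)) (betaSet (a j) (mu j) \ {β}) ∧
    ∀ j' ≠ j, betaSet (a j') (lam j') = betaSet (a j') (mu j')

/-- The number of inversions (length) of a permutation of `Fin d`. -/
noncomputable def permLength (d : ℕ) (σ : Equiv.Perm (Fin d)) : ℕ :=
  (Finset.univ.filter (fun p : Fin d × Fin d => p.1 < p.2 ∧ σ p.2 < σ p.1)).card

/-- Indicator of residue `i`. -/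
noncomputable def ind (e : ℕ) (i x : ℤ) : ℤ := if x % (e : ℤ) = i % e then 1 else 0

lemma ind_shift (e : ℕ) (i x k : ℤ) : ind e (i + k) (x + k) = ind e i x := by
  unfold ind
  have : ((x + k) % (e : ℤ) = (i + k) % e) ↔ (x % (e : ℤ) = i % e) :=
    ⟨fun h => Int.ModEq.add_right_cancel' k h, fun h => Int.ModEq.add_right k h⟩
  simp only [this]

/-- The diagram in a box, as a finset. -/
noncomputable def dfin {r : ℕ} (lam : Multipartition r) (N M : ℕ) : Finset (Node r) :=
  (Finset.range N ×ˢ Finset.range M ×ˢ Finset.univ).filter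
    (fun x => x.2.1 < (lam x.2.2).part x.1)

lemma exists_bounds {r : ℕ} (lam : Multipartition r) : ∃ N M : ℕ,
    (∀ j b, N ≤ b → (lam j).part b = 0) ∧ (∀ j b, (lam j).part b ≤ M) := by
  choose N hN using fun j => (lam j).finite_support
  refine ⟨∑ j, N j, ∑ j, (lam j).part 0, ?_, ?_⟩
  · intro j b hb
    apply hN
    exact (Finset.single_le_sum (fun _ _ => Nat.zero_le _) (Finset.mem_univ j)).trans hb
  · intro j b
    refine ((lam j).antitone (Nat.zero_le b)).trans ?_
    exact Finset.single_le_sum (f := fun j => (lam j).part 0)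
      (fun _ _ => Nat.zero_le _) (Finset.mem_univ j)

lemma mem_dfin {r : ℕ} (lam : Multipartition r) {N M : ℕ}
    (hN : ∀ j b, N ≤ b → (lam j).part b = 0) (hM : ∀ j b, (lam j).part b ≤ M) (x : Node r) :
    x ∈ dfin lam N M ↔ x.2.1 < (lam x.2.2).part x.1 := by
  unfold dfin
  simp only [Finset.mem_filter, Finset.mem_product, Finset.mem_range, Finset.mem_univ, and_true]
  refine ⟨fun h => h.2, fun h => ⟨⟨?_, h.trans_le (hM _ _)⟩, h⟩⟩
  by_contra hc
  have := hN x.2.2 x.1 (by omega)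
  omega

lemma sum_dfin {r : ℕ} (lam : Multipartition r) {N M : ℕ}
    (hM : ∀ j b, (lam j).part b ≤ M) (G : Fin r → ℕ → ℕ → ℤ) :
    ∑ x ∈ dfin lam N M, G x.2.2 x.1 x.2.1 =
      ∑ j, ∑ b ∈ Finset.range N, ∑ c ∈ Finset.range ((lam j).part b), G j b c := by
  unfold dfin
  rw [Finset.sum_filter, Finset.sum_product]
  simp only [Finset.sum_product]
  rw [Finset.sum_comm (s := Finset.univ)]
  refine Finset.sum_congr rfl fun b _ => ?_
  rw [Finset.sum_comm]
  refine Finset.sum_congr rfl fun j _ => ?_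
  rw [← Finset.sum_filter]
  refine Finset.sum_congr ?_ fun _ _ => rfl
  ext c
  simp only [Finset.mem_filter, Finset.mem_range]
  have := hM j b
  omega

lemma msize_eq {r : ℕ} (lam : Multipartition r) {N M : ℕ}
    (hN : ∀ j b, N ≤ b → (lam j).part b = 0) (hM : ∀ j b, (lam j).part b ≤ M) :
    (msize lam : ℤ) = ∑ x ∈ dfin lam N M, 1 := by
  have : diag lam = ↑(dfin lam N M) := by
    ext x
    rw [Finset.mem_coe, mem_dfin lam hN hM]; rfl
  rw [msize, this, Set.ncard_coe_finset]; simp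

lemma nodeCount_eq {r : ℕ} (e : ℕ) (a : Fin r → ℤ) (lam : Multipartition r) {N M : ℕ}
    (hN : ∀ j b, N ≤ b → (lam j).part b = 0) (hM : ∀ j b, (lam j).part b ≤ M) (i : ℤ) :
    (nodeCount e a lam i : ℤ) =
      ∑ x ∈ dfin lam N M, ind e i (a x.2.2 + (x.2.1 : ℤ) - (x.1 : ℤ)) := by
  have : {x : Node r | (lam x.2.2).InDiag x.1 x.2.1 ∧
    (a x.2.2 + (x.2.1 : ℤ) - (x.1 : ℤ)) % (e : ℤ) = i % e} =
      ↑((dfin lam N M).filter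
        (fun x => (a x.2.2 + (x.2.1 : ℤ) - (x.1 : ℤ)) % (e : ℤ) = i % e)) := by
    ext x
    rw [Finset.mem_coe, Finset.mem_filter, mem_dfin lam hN hM]; rfl
  rw [nodeCount, this, Set.ncard_coe_finset, Finset.card_filter]
  simp [ind]

lemma sum_ind (e : ℕ) (he : 2 ≤ e) (x : ℤ) : ∑ i ∈ Finset.range e, ind e (i : ℤ) x = 1 := by
  have h0 : 0 ≤ x % (e : ℤ) := Int.emod_nonneg _ (by omega)
  have h1 : x % (e : ℤ) < e := Int.emod_lt_of_pos _ (by omega)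
  rw [Finset.sum_eq_single (x % (e : ℤ)).toNat]
  · unfold ind
    rw [if_pos]
    rw [Int.toNat_of_nonneg h0, Int.emod_emod_of_dvd _ dvd_rfl]
  · intro b hb hne
    unfold ind
    rw [if_neg]
    intro h
    rw [Finset.mem_range] at hb
    rw [Int.emod_eq_of_lt (a := (b : ℤ)) (by omega) (by omega)] at h
    omega
  · intro h
    exact absurd (Finset.mem_range.2 (by omega)) h

lemma msize_sum {r : ℕ} (e : ℕ) (he : 2 ≤ e) (a : Fin r → ℤ) (lam : Multipartition r) :
    (msize lam : ℤ) = ∑ i ∈ Finset.range e, (nodeCount e a lam (i : ℤ) : ℤ) := by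
  obtain ⟨N, M, hN, hM⟩ := exists_bounds lam
  rw [msize_eq lam hN hM]
  simp only [nodeCount_eq e a lam hN hM]
  rw [Finset.sum_comm]
  exact Finset.sum_congr rfl fun x _ => (sum_ind e he _).symm

lemma removable_eq {r : ℕ} (e : ℕ) (a : Fin r → ℤ) (lam : Multipartition r) {N : ℕ}
    (i : ℤ) (j : Fin r) (hN : ∀ b, N ≤ b → (lam j).part b = 0) :
    (removableCount e a lam i j : ℤ) = ∑ b ∈ Finset.range N,
      if (lam j).part (b + 1) < (lam j).part b then
        ind e i (a j + ((lam j).part b : ℤ) - 1 - b) else 0 := by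
  have : {p : ℕ × ℕ | (lam j).Removable p.1 p.2 ∧
    (a j + (p.2 : ℤ) - (p.1 : ℤ)) % (e : ℤ) = i % e} =
      ↑(((Finset.range N).filter (fun b => (lam j).part (b + 1) < (lam j).part b ∧
        (a j + ((lam j).part b : ℤ) - 1 - b) % (e : ℤ) = i % e)).image
          (fun b => (b, (lam j).part b - 1))) := by
    ext ⟨b, c⟩
    simp only [Set.mem_setOf_eq, PartitionFun.Removable, Finset.coe_image, Set.mem_image,
      Finset.mem_coe, Finset.mem_filter, Finset.mem_range, Prod.mk.injEq]
    constructor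
    · rintro ⟨⟨h1, h2⟩, h3⟩
      refine ⟨b, ⟨?_, by omega, ?_⟩, rfl, by omega⟩
      · by_contra hc
        have := hN b (by omega)
        omega
      · rw [← h3, h1]; congr 1; push_cast; ring
    · rintro ⟨b', ⟨h1, h2, h3⟩, rfl, rfl⟩
      refine ⟨⟨by omega, by omega⟩, ?_⟩
      rw [← h3]; congr 1
      omega
  rw [removableCount, this, Set.ncard_coe_finset, Finset.card_image_of_injective _
    (fun x y h => (Prod.mk.inj h).1), Finset.card_filter]
  push_cast
  refine Finset.sum_congr rfl fun b _ => ?_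
  unfold ind
  rw [ite_and]

lemma addable_eq {r : ℕ} (e : ℕ) (a : Fin r → ℤ) (lam : Multipartition r) {N : ℕ}
    (i : ℤ) (j : Fin r) (hN : ∀ b, N ≤ b → (lam j).part b = 0) :
    (addableCount e a lam i j : ℤ) = (∑ b ∈ Finset.range N,
      if (lam j).part (b + 1) < (lam j).part b then
        ind e i (a j + ((lam j).part (b + 1) : ℤ) - (b + 1 : ℕ)) else 0)
        + ind e i (a j + ((lam j).part 0 : ℤ) - (0 : ℕ)) := by
  have : {p : ℕ × ℕ | (lam j).Addable p.1 p.2 ∧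
    (a j + (p.2 : ℤ) - (p.1 : ℤ)) % (e : ℤ) = i % e} =
      ↑(((Finset.range (N + 1)).filter
        (fun b => (b = 0 ∨ (lam j).part b < (lam j).part (b - 1)) ∧
        (a j + ((lam j).part b : ℤ) - b) % (e : ℤ) = i % e)).image
          (fun b => (b, (lam j).part b))) := by
    ext ⟨b, c⟩
    simp only [Set.mem_setOf_eq, PartitionFun.Addable, Finset.coe_image, Set.mem_image,
      Finset.mem_coe, Finset.mem_filter, Finset.mem_range, Prod.mk.injEq]
    constructor
    · rintro ⟨⟨h1, h2⟩, h3⟩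
      refine ⟨b, ⟨?_, h2, ?_⟩, rfl, h1⟩
      · by_contra hc
        have := hN (b - 1) (by omega)
        omega
      · rw [← h3, h1]
    · rintro ⟨b', ⟨h1, h2, h3⟩, rfl, rfl⟩
      exact ⟨⟨rfl, h2⟩, h3⟩
  rw [addableCount, this, Set.ncard_coe_finset, Finset.card_image_of_injective _
    (fun x y h => (Prod.mk.inj h).1), Finset.card_filter]
  push_cast
  rw [Finset.sum_range_succ']
  congr 1
  · refine Finset.sum_congr rfl fun b _ => ?_
    unfold ind
    rw [← ite_and]
    simp
  · simp [ind]

lemma row_telescope (f : ℤ → ℤ) (s : ℤ) (L : ℕ) :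
    ∑ c ∈ Finset.range L, (2 * f (s + c) - f (s + c + 1) - f (s + c - 1)) =
      f (s + L - 1) - f (s + L) - f (s - 1) + f s := by
  induction L with
  | zero => simp
  | succ k ih =>
    rw [Finset.sum_range_succ, ih]
    push_cast
    rw [show s + ((k : ℤ) + 1) - 1 = s + k by ring, show s + ((k : ℤ) + 1) = s + k + 1 by ring]
    ring

lemma part_telescope (f : ℤ → ℤ) (s : ℤ) (p : ℕ → ℕ) (hp : Antitone p) (N : ℕ) :
    (∑ b ∈ Finset.range N, if p (b + 1) < p b then f (s + p b - 1 - b) else 0) -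
      ((∑ b ∈ Finset.range N, if p (b + 1) < p b then f (s + p (b + 1) - (b + 1 : ℕ)) else 0)
        + f (s + p 0 - (0 : ℕ))) =
    (∑ b ∈ Finset.range N, ∑ c ∈ Finset.range (p b),
      (2 * f (s + c - b) - f (s + c - b + 1) - f (s + c - b - 1))) - f s
      + f (s - N) - f (s + p N - N) := by
  induction N with
  | zero => simp
  | succ k ih =>
    have hrow := row_telescope f (s - k) (p k)
    have : ∑ c ∈ Finset.range (p k),
      (2 * f (s + c - k) - f (s + c - k + 1) - f (s + c - k - 1)) =
        f (s - k + p k - 1) - f (s - k + p k) - f (s - k - 1) + f (s - k) := by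
      rw [← hrow]
      refine Finset.sum_congr rfl fun c _ => ?_
      rw [show s + (c : ℤ) - k = s - k + c by ring]
    rw [Finset.sum_range_succ, Finset.sum_range_succ, Finset.sum_range_succ, this]
    have e1 : s - (k : ℤ) + p k - 1 = s + p k - 1 - k := by ring
    have e2 : s - (k : ℤ) + p k = s + p k - k := by ring
    have e3 : s - ((k + 1 : ℕ) : ℤ) = s - k - 1 := by push_cast; ring
    rw [e1, e2, e3]
    split_ifs with h
    · linarith
    · have h' : p (k + 1) = p k := le_antisymm (hp (Nat.le_succ k)) (not_lt.1 h)
      have e4 : s + (p (k + 1) : ℤ) - ((k + 1 : ℕ) : ℤ) = s + p k - 1 - k := by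
        rw [h']; push_cast; ring
      rw [e4]
      linarith

lemma hub_eq {r : ℕ} (e : ℕ) (a : Fin r → ℤ) (lam : Multipartition r) (i : ℤ) :
    hub e a lam i = 2 * (nodeCount e a lam i : ℤ) - nodeCount e a lam (i - 1)
      - nodeCount e a lam (i + 1) - ∑ j, ind e i (a j) := by
  obtain ⟨N, M, hN, hM⟩ := exists_bounds lam
  have h1 : ∀ x : ℤ, ind e (i - 1) x = ind e i (x + 1) := fun x => by
    rw [← ind_shift e (i - 1) x 1]; simp
  have h2 : ∀ x : ℤ, ind e (i + 1) x = ind e i (x - 1) := fun x => by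
    rw [← ind_shift e i (x - 1) 1]; simp
  simp only [nodeCount_eq e a lam hN hM, h1, h2]
  rw [Finset.mul_sum, ← Finset.sum_sub_distrib, ← Finset.sum_sub_distrib,
    sum_dfin lam hM (fun j b c => 2 * ind e i (a j + c - b) - ind e i (a j + c - b + 1)
      - ind e i (a j + c - b - 1)), ← Finset.sum_sub_distrib, hub]
  refine Finset.sum_congr rfl fun j _ => ?_
  rw [delta, removable_eq e a lam i j (hN j), addable_eq e a lam i j (hN j),
    part_telescope (ind e i) (a j) (lam j).part (lam j).antitone N, hN j N le_rfl]
  simp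

lemma nodeCount_mod {r : ℕ} (e : ℕ) (a : Fin r → ℤ) (lam : Multipartition r) (i : ℤ) :
    nodeCount e a lam (i + e) = nodeCount e a lam i := by
  simp [nodeCount]

lemma const_of_harmonic (e : ℕ) (he : 2 ≤ e) (d : ℤ → ℤ)
    (hper : ∀ i, d (i + e) = d i) (hh : ∀ i, 2 * d i = d (i - 1) + d (i + 1)) :
    ∀ i, d i = d 0 := by
  have lin : ∀ i, ∀ k : ℕ, d (i + k) = d i + k * (d 1 - d 0) := by
    have step : ∀ i : ℤ, d (i + 1) - d i = d 1 - d 0 := by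
      intro i
      induction i using Int.induction_on with
      | zero => simp
      | succ k ih =>
        have := hh (k + 1)
        rw [add_sub_cancel_right] at this
        linarith
      | pred k ih =>
        have := hh (-k)
        rw [sub_add_cancel]
        linarith
    intro i k
    induction k with
    | zero => simp
    | succ k ih =>
      have := step (i + k)
      push_cast
      rw [← add_assoc]
      linarith
  have h0 : d 1 - d 0 = 0 := by
    have h := lin 0 e
    rw [hper] at h
    have : (e : ℤ) * (d 1 - d 0) = 0 := by linarith
    rcases mul_eq_zero.1 this with h | h
    · omega
    · exact h
  intro i
  rcases le_total 0 i with hi | hi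
  · have := lin 0 i.toNat
    rw [h0, Int.toNat_of_nonneg hi] at this
    simpa using this
  · have := lin i (-i).toNat
    rw [h0, Int.toNat_of_nonneg (by omega)] at this
    simpa using this.symm

/-- Proposition 3.2(1): if `λ` is a multipartition of `n` and `μ`
a multipartition of `m` with the same hub, then `m ≡ n (mod e)` and
`w(λ) − w(μ) = r(n − m)/e`. -/
theorem stmt_15 {e r : ℕ} (he : 2 ≤ e) (hr : 0 < r) (a : Fin r → ℤ)
    (lam mu : Multipartition r) (n m : ℕ)
    (hn : msize lam = n) (hm : msize mu = m)
    (hsame : SameHub e a lam mu) :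
    (m : ℤ) ≡ (n : ℤ) [ZMOD (e : ℤ)] ∧
      weight e a lam - weight e a mu = (r : ℚ) * ((n : ℚ) - (m : ℚ)) / (e : ℚ) := by
  obtain ⟨d, hd⟩ : ∃ d : ℤ, ∀ i, (nodeCount e a lam i : ℤ) = nodeCount e a mu i + d := by
    refine ⟨(nodeCount e a lam 0 : ℤ) - nodeCount e a mu 0, fun i => ?_⟩
    have := const_of_harmonic e he
      (fun i => (nodeCount e a lam i : ℤ) - nodeCount e a mu i)
      (fun i => by simp only [nodeCount_mod])
      (fun i => by
        have h := hsame i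
        rw [hub_eq, hub_eq] at h
        linarith) i
    linarith
  have hnm : (n : ℤ) = m + e * d := by
    rw [← hn, ← hm, msize_sum e he a lam, msize_sum e he a mu]
    simp only [hd, Finset.sum_add_distrib]
    simp
  constructor
  · rw [hnm]
    exact (Int.modEq_iff_dvd.2 ⟨d, by ring⟩)
  · have hdq : ∀ i, (nodeCount e a lam i : ℚ) = nodeCount e a mu i + d := fun i => by
      exact_mod_cast hd i
    have hnq : (n : ℚ) = m + e * d := by exact_mod_cast hnm
    have he0 : (e : ℚ) ≠ 0 := by
      have : e ≠ 0 := by omega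
      exact_mod_cast this
    rw [hnq]
    unfold weight
    simp only [hdq, Finset.sum_add_distrib, add_sub_add_right_eq_sub]
    simp only [Finset.sum_const, Finset.card_univ, Fintype.card_fin, nsmul_eq_mul]
    field_simp
    ring

end AK
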